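/- Let G and H be finite groups and let X ≤ G×H be a subgroup. Then X * X° = Δ(p₁(X))·(k₁(X) × {1}) = Δ(p₁(X))·({1} × k₁(X)) = Δ(p₁(X))·(k₁(X) × k₁(X)) as subgroups of G×G, where in particular each of the three set-products on the right is a subgroup of G×G. -/

import Mathlib

/-!
Unfolding the definitions, `(a, b) ∈ X * X°` iff there is `h` with `(a, h) ∈ X` and `(b, h) ∈ X`.
Both `Δ(p₁(X))` and `k₁(X) × k₁(X)` lie in the subgroup `X * X°`, hence so do all three products.
Conversely, if `(a, h), (b, h) ∈ X`, then `a, b ∈ p₁(X)` and `b⁻¹a, a⁻¹b ∈ k₁(X)`, so that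
`(a, b) = (b, b)(b⁻¹a, 1) = (a, a)(1, a⁻¹b)` lies in the products with `k₁(X) × 1` and
`1 × k₁(X)`, and therefore also in the larger product with `k₁(X) × k₁(X)`.
-/

open Pointwise

/-- Composition of subgroups `X ≤ G × H` and `Y ≤ H × K`. -/
def Subgroup.comp' {G H K : Type*} [Group G] [Group H] [Group K]
    (X : Subgroup (G × H)) (Y : Subgroup (H × K)) : Subgroup (G × K) where
  carrier := {p : G × K | ∃ h : H, (p.1, h) ∈ X ∧ (h, p.2) ∈ Y}
  one_mem' := ⟨1, X.one_mem, Y.one_mem⟩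
  mul_mem' := by
    rintro ⟨a, c⟩ ⟨a', c'⟩ ⟨b, hX, hY⟩ ⟨b', hX', hY'⟩
    exact ⟨b * b', X.mul_mem hX hX', Y.mul_mem hY hY'⟩
  inv_mem' := by
    rintro ⟨a, c⟩ ⟨b, hX, hY⟩
    exact ⟨b⁻¹, X.inv_mem hX, Y.inv_mem hY⟩

/-- The opposite subgroup `X° ≤ H × G` of a subgroup `X ≤ G × H`. -/
def Subgroup.opp' {G H : Type*} [Group G] [Group H] (X : Subgroup (G × H)) :
    Subgroup (H × G) :=
  X.map (MulEquiv.prodComm : G × H ≃* H × G).toMonoidHom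

/-- The diagonal subgroup `Δ(P) = {(x,x) | x ∈ P} ≤ G × G` of a subgroup `P ≤ G`. -/
def diagSubgroup {G : Type*} [Group G] (P : Subgroup G) : Subgroup (G × G) :=
  (P.subtype.prod P.subtype).range

theorem mem_comp_opp_iff {G H : Type*} [Group G] [Group H] (X : Subgroup (G × H)) (a b : G) :
    (a, b) ∈ X.comp' X.opp' ↔ ∃ h : H, (a, h) ∈ X ∧ (b, h) ∈ X := by
  have key : ∀ h : H, (h, b) ∈ X.opp' ↔ (b, h) ∈ X := by
    intro h
    constructor
    · rintro ⟨⟨x, y⟩, hxy, e⟩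
      obtain ⟨rfl, rfl⟩ := Prod.mk.inj e
      exact hxy
    · intro hb
      exact ⟨(b, h), hb, rfl⟩
  exact exists_congr fun h => and_congr_right fun _ => key h

theorem mem_diagSubgroup_self {G : Type*} [Group G] {P : Subgroup G} {x : G} (hx : x ∈ P) :
    (x, x) ∈ diagSubgroup P :=
  ⟨⟨x, hx⟩, rfl⟩

theorem diag_mul_subset {G H : Type*} [Group G] [Group H] (X : Subgroup (G × H))
    (S : Subgroup (G × G))
    (hS : S ≤ (X.comap (MonoidHom.inl G H)).prod (X.comap (MonoidHom.inl G H))) :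
    (diagSubgroup (X.map (MonoidHom.fst G H)) : Set (G × G)) * (S : Set (G × G)) ⊆
      (X.comp' X.opp' : Subgroup (G × G)) := by
  rintro _ ⟨_, ⟨⟨x, hx⟩, rfl⟩, ⟨k, l⟩, hkl, rfl⟩
  obtain ⟨⟨x, h⟩, hX, rfl⟩ := hx
  obtain ⟨hk, hl⟩ := hS hkl
  exact mul_mem ((mem_comp_opp_iff X x x).2 ⟨h, hX, hX⟩) ((mem_comp_opp_iff X k l).2 ⟨1, hk, hl⟩)

/-- If `(a, h), (b, h) ∈ X`, then `b⁻¹a ∈ k₁(X)`. -/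
theorem inv_mul_mem_k₁ {G H : Type*} [Group G] [Group H] {X : Subgroup (G × H)} {a b : G} {h : H}
    (ha : (a, h) ∈ X) (hb : (b, h) ∈ X) : b⁻¹ * a ∈ X.comap (MonoidHom.inl G H) := by
  simpa using X.mul_mem (X.inv_mem hb) ha

theorem comp_opp_subset_left {G H : Type*} [Group G] [Group H] (X : Subgroup (G × H)) :
    ((X.comp' X.opp' : Subgroup (G × G)) : Set (G × G)) ⊆
      (diagSubgroup (X.map (MonoidHom.fst G H)) : Set (G × G)) *
        (((X.comap (MonoidHom.inl G H)).prod (⊥ : Subgroup G) : Subgroup (G × G)) :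
          Set (G × G)) := by
  rintro ⟨a, b⟩ hab
  obtain ⟨h, ha, hb⟩ := (mem_comp_opp_iff X a b).1 hab
  exact ⟨(b, b), mem_diagSubgroup_self ⟨(b, h), hb, rfl⟩, (b⁻¹ * a, 1),
    ⟨inv_mul_mem_k₁ ha hb, one_mem _⟩, by simp⟩

theorem comp_opp_subset_right {G H : Type*} [Group G] [Group H] (X : Subgroup (G × H)) :
    ((X.comp' X.opp' : Subgroup (G × G)) : Set (G × G)) ⊆
      (diagSubgroup (X.map (MonoidHom.fst G H)) : Set (G × G)) *
        (((⊥ : Subgroup G).prod (X.comap (MonoidHom.inl G H)) : Subgroup (G × G)) :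
          Set (G × G)) := by
  rintro ⟨a, b⟩ hab
  obtain ⟨h, ha, hb⟩ := (mem_comp_opp_iff X a b).1 hab
  exact ⟨(a, a), mem_diagSubgroup_self ⟨(a, h), ha, rfl⟩, (1, a⁻¹ * b),
    ⟨one_mem _, inv_mul_mem_k₁ hb ha⟩, by simp⟩

/-- `X * X° = Δ(p₁(X))·(k₁(X) × 1) = Δ(p₁(X))·(1 × k₁(X)) = Δ(p₁(X))·(k₁(X) × k₁(X))`,
and each of the three set-products on the right is a subgroup of `G × G`.
Here `p₁(X) = X.map (MonoidHom.fst G H)` and `k₁(X) = X.comap (MonoidHom.inl G H)`. -/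
theorem comp_opp_eq (G H : Type*) [Group G] [Group H] [Finite G] [Finite H]
    (X : Subgroup (G × H)) :
    ((X.comp' X.opp' : Subgroup (G × G)) : Set (G × G)) =
        (diagSubgroup (X.map (MonoidHom.fst G H)) : Set (G × G)) *
          (((X.comap (MonoidHom.inl G H)).prod (⊥ : Subgroup G) : Subgroup (G × G)) :
            Set (G × G)) ∧
      ((X.comp' X.opp' : Subgroup (G × G)) : Set (G × G)) =
        (diagSubgroup (X.map (MonoidHom.fst G H)) : Set (G × G)) *
          (((⊥ : Subgroup G).prod (X.comap (MonoidHom.inl G H)) : Subgroup (G × G)) :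
            Set (G × G)) ∧
      ((X.comp' X.opp' : Subgroup (G × G)) : Set (G × G)) =
        (diagSubgroup (X.map (MonoidHom.fst G H)) : Set (G × G)) *
          (((X.comap (MonoidHom.inl G H)).prod (X.comap (MonoidHom.inl G H)) :
            Subgroup (G × G)) : Set (G × G)) ∧
      (∃ S₁ : Subgroup (G × G), (S₁ : Set (G × G)) =
        (diagSubgroup (X.map (MonoidHom.fst G H)) : Set (G × G)) *
          (((X.comap (MonoidHom.inl G H)).prod (⊥ : Subgroup G) : Subgroup (G × G)) :
            Set (G × G))) ∧
      (∃ S₂ : Subgroup (G × G), (S₂ : Set (G × G)) =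
        (diagSubgroup (X.map (MonoidHom.fst G H)) : Set (G × G)) *
          (((⊥ : Subgroup G).prod (X.comap (MonoidHom.inl G H)) : Subgroup (G × G)) :
            Set (G × G))) ∧
      (∃ S₃ : Subgroup (G × G), (S₃ : Set (G × G)) =
        (diagSubgroup (X.map (MonoidHom.fst G H)) : Set (G × G)) *
          (((X.comap (MonoidHom.inl G H)).prod (X.comap (MonoidHom.inl G H)) :
            Subgroup (G × G)) : Set (G × G))) := by
  have hl := Subgroup.prod_mono (le_refl (X.comap (MonoidHom.inl G H)))
    (bot_le (a := X.comap (MonoidHom.inl G H)))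
  have hr := Subgroup.prod_mono (bot_le (a := X.comap (MonoidHom.inl G H)))
    (le_refl (X.comap (MonoidHom.inl G H)))
  have h₁ := (comp_opp_subset_left X).antisymm (diag_mul_subset X _ hl)
  have h₂ := (comp_opp_subset_right X).antisymm (diag_mul_subset X _ hr)
  have h₃ := ((comp_opp_subset_left X).trans (Set.mul_subset_mul_left hl)).antisymm
    (diag_mul_subset X _ le_rfl)
  exact ⟨h₁, h₂, h₃, ⟨_, h₁⟩, ⟨_, h₂⟩, ⟨_, h₃⟩⟩
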